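/- Let (T,f) be a Hubbard tree and let {z₁, z₂, …, z_n = z₀} be a periodic orbit of f that contains no endpoint of T. If the critical orbit is preperiodic, assume in addition that the itineraries of all points z_k differ from the itineraries of all endpoints of T. Then there exist a unique point z of the orbit and two different connected components of T \ {z} such that the critical value c₁ lies in one component and c₀ together with all other points of the orbit lie in the other component. -/

import Mathlib

/- Common definitions for formalizing "Admissibility of kneading sequences and
structure of Hubbard trees for quadratic polynomials" by Bruin–Schleicher. -/

namespace HubbardTrees

/-- The symbols `0`, `1`, `*` used for itineraries and kneading sequences. -/
inductive Sym : Type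
  | zero : Sym
  | one : Sym
  | star : Sym
deriving DecidableEq

/-- `A` is an arc in `X` joining `x` and `y` (a point if `x = y`, otherwise a
homeomorphic image of `[0,1]` with endpoints `x` and `y`). -/
def IsArcBetween {X : Type*} [TopologicalSpace X] (A : Set X) (x y : X) : Prop :=
  (x = y ∧ A = {x}) ∨
  (x ≠ y ∧ ∃ γ : Path x y, Topology.IsEmbedding ⇑γ ∧ Set.range ⇑γ = A)

/-- The global arms at `x`: the connected components of `X \ {x}`. -/
def arms {X : Type*} [TopologicalSpace X] (x : X) : Set (Set X) :=
  {C | ∃ y, y ≠ x ∧ C = connectedComponentIn {x}ᶜ y}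

/-- The global arm at `x` containing `y` (for `y ≠ x`): the component of `X \ {x}`
containing `y`.  Local arms at `x` being germs of global arms, we represent the local
arm at `x` pointing towards `y` by this set. -/
def armTo {X : Type*} [TopologicalSpace X] (x y : X) : Set X :=
  connectedComponentIn {x}ᶜ y

/-- `x` is an endpoint: it has exactly one arm. -/
def IsEndpoint {X : Type*} [TopologicalSpace X] (x : X) : Prop :=
  (arms x).ncard = 1

/-- `x` is a branch point: it has at least three arms. -/
def IsBranchPt {X : Type*} [TopologicalSpace X] (x : X) : Prop :=
  3 ≤ (arms x).ncard

/-- `f` maps the set `A` homeomorphically onto its image. -/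
def MapsHomeoOn {X : Type*} [TopologicalSpace X] (f : X → X) (A : Set X) : Prop :=
  Topology.IsEmbedding (A.restrict f)

/-- `f` is a local homeomorphism onto its image at `x`. -/
def IsLocalHomeoAt {X : Type*} [TopologicalSpace X] (f : X → X) (x : X) : Prop :=
  ∃ U : Set X, IsOpen U ∧ x ∈ U ∧ Topology.IsEmbedding (U.restrict f)

/-- `g` sends the local arm at `x` represented by the global arm `C` to the local
arm at `g x` represented by `C'` (germ condition: some initial piece of `C` at `x`
is mapped into `C'`). -/
def MapsLocalArm {X : Type*} [TopologicalSpace X] (g : X → X) (x : X) (C C' : Set X) : Prop :=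
  C ∈ arms x ∧ C' ∈ arms (g x) ∧ ∃ U ∈ nhds x, g '' (C ∩ U) ⊆ C'

/-- `z` is periodic under `f` with exact period `n`. -/
def ExactPeriod {Y : Type*} (f : Y → Y) (z : Y) (n : ℕ) : Prop :=
  1 ≤ n ∧ f^[n] z = z ∧ ∀ k, 1 ≤ k → k < n → f^[k] z ≠ z

/-- The first return map `f^[n]` of the fixed point `z` of `f^[n]` permutes all the
local arms at `z` transitively in a single cycle. -/
def ArmsTransitive {X : Type*} [TopologicalSpace X] (f : X → X) (n : ℕ) (z : X) : Prop :=
  ∀ C ∈ arms z, ∀ C' ∈ arms z, ∃ j : ℕ, MapsLocalArm (f^[n * j]) z C C'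

/-- An (abstract) Hubbard tree: a finite topological tree `X` together with a
continuous surjection `f` and a critical point `c0`, subject to the axioms of
Bruin–Schleicher. -/
structure HubbardTree (X : Type*) [TopologicalSpace X] : Type _ where
  /-- the dynamics -/
  f : X → X
  /-- the critical point -/
  c0 : X
  compact : CompactSpace X
  t2 : T2Space X
  conn : ConnectedSpace X
  /-- the unique arc `[x,y]` joining two points -/
  arc : X → X → Set X
  arc_isArc : ∀ x y : X, IsArcBetween (arc x y) x y
  arc_unique : ∀ (x y : X) (A : Set X), IsArcBetween A x y → A = arc x y
  -- finiteness of the tree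
  arms_finite : ∀ x : X, (arms x).Finite
  branch_finite : Set.Finite {x : X | IsBranchPt x}
  endpoint_finite : Set.Finite {x : X | IsEndpoint x}
  cont : Continuous f
  surj : Function.Surjective f
  /-- every point has at most two inverse images -/
  two_preimages : ∀ y : X, ∃ a b : X, f ⁻¹' {y} ⊆ {a, b}
  /-- local homeomorphism onto its image away from the critical point -/
  local_homeo : ∀ x : X, x ≠ c0 → IsLocalHomeoAt f x
  /-- all endpoints lie on the critical orbit -/
  endpoints_on_orbit : ∀ x : X, IsEndpoint x → ∃ k : ℕ, f^[k] c0 = x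
  /-- the critical point is periodic or preperiodic -/
  crit_preperiodic : ∃ k n : ℕ, 1 ≤ n ∧ f^[k + n] c0 = f^[k] c0
  /-- the critical point is not fixed -/
  crit_not_fixed : f c0 ≠ c0
  /-- expansivity -/
  expansive : ∀ x y : X, x ≠ y →
    (IsBranchPt x ∨ ∃ k : ℕ, f^[k] c0 = x) →
    (IsBranchPt y ∨ ∃ k : ℕ, f^[k] c0 = y) →
    ∃ n : ℕ, c0 ∈ f^[n] '' (arc x y)

namespace HubbardTree

variable {X : Type*} [TopologicalSpace X] (H : HubbardTree X)

/-- The critical value `c₁ = f(c₀)`. -/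
def c1 : X := H.f H.c0

/-- The component `T₁` of `T \ {c₀}` containing the critical value. -/
def T1 : Set X := connectedComponentIn {H.c0}ᶜ H.c1

open Classical in
/-- The symbol (`0`, `1` or `*`) attached to a point of the tree. -/
noncomputable def symOf (x : X) : Sym :=
  if x = H.c0 then Sym.star else if x ∈ H.T1 then Sym.one else Sym.zero

/-- The itinerary of `x`: a sequence of symbols, 1-indexed (the value at index `0`
is irrelevant); entry `k ≥ 1` is the symbol of `f^[k-1] x`. -/
noncomputable def itin (x : X) : ℕ → Sym :=
  fun k => H.symOf (H.f^[k - 1] x)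

/-- The kneading sequence: the itinerary of the critical value (1-indexed). -/
noncomputable def kneading : ℕ → Sym := H.itin H.c1

/-- `z` is the characteristic point of its periodic orbit: `c₁` lies in one
component of `X \ {z}` while `c₀` and all other points of the orbit lie in a
different component. -/
def IsCharacteristic (z : X) : Prop :=
  ∃ Cv Cz : Set X, Cv ∈ arms z ∧ Cz ∈ arms z ∧ Cv ≠ Cz ∧
    H.c1 ∈ Cv ∧ H.c0 ∈ Cz ∧ ∀ k : ℕ, H.f^[k] z ≠ z → H.f^[k] z ∈ Cz

/-- The first return map fixes the local arm at `z` pointing to the critical point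
and permutes all other local arms transitively in a single cycle. -/
def OtherArmsTransitive (n : ℕ) (z : X) : Prop :=
  ∀ C ∈ arms z, C ≠ armTo z H.c0 → ∀ C' ∈ arms z, C' ≠ armTo z H.c0 →
    ∃ j : ℕ, MapsLocalArm (H.f^[n * j]) z C C'

/-- `z` is the characteristic point of an evil periodic orbit of branch points of
exact period `n`. -/
def IsEvilOrbit (z : X) (n : ℕ) : Prop :=
  ExactPeriod H.f z n ∧ (∀ k : ℕ, IsBranchPt (H.f^[k] z)) ∧
    H.IsCharacteristic z ∧ ¬ ArmsTransitive H.f n z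

/-- `x` is precritical with `Step(x) = k`: `k ≥ 1` is minimal with `f^[k] x = c₁`. -/
def Step (x : X) (k : ℕ) : Prop :=
  1 ≤ k ∧ H.f^[k] x = H.c1 ∧ ∀ j, 1 ≤ j → j < k → H.f^[j] x ≠ H.c1

/-- `x` is the closest precritical point `ζ_k`. -/
def IsClosestPrecritical (x : X) (k : ℕ) : Prop :=
  H.Step x k ∧ ∀ j, 1 ≤ j → j < k → H.c1 ∉ H.f^[j] '' (H.arc H.c1 x)

/-- `x` is the earliest precritical point on the set `A`, with `Step(x) = k`:
it is a precritical point on `A` of minimal Step. -/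
def IsEarliestPrecriticalOn (A : Set X) (x : X) (k : ℕ) : Prop :=
  x ∈ A ∧ H.Step x k ∧ ∀ y ∈ A, ∀ j : ℕ, H.Step y j → k ≤ j

/-- Marked points: branch points and points of the critical orbit. -/
def MarkedPt (x : X) : Prop :=
  IsBranchPt x ∨ ∃ k : ℕ, H.f^[k] H.c0 = x

/-- Two marked points are joined by an edge if the arc between them contains no
further marked point. -/
def IsEdge (x y : X) : Prop :=
  H.MarkedPt x ∧ H.MarkedPt y ∧ x ≠ y ∧
    ∀ w ∈ H.arc x y, H.MarkedPt w → w = x ∨ w = y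

/-- Equivalence of Hubbard trees: a bijection between the marked points which
conjugates the dynamics and preserves edges. -/
def Equivalent {Y : Type*} [TopologicalSpace Y] (H' : HubbardTree Y) : Prop :=
  ∃ φ : X → Y,
    (∀ x : X, H.MarkedPt x → H'.MarkedPt (φ x)) ∧
    (∀ x x' : X, H.MarkedPt x → H.MarkedPt x' → φ x = φ x' → x = x') ∧
    (∀ y : Y, H'.MarkedPt y → ∃ x : X, H.MarkedPt x ∧ φ x = y) ∧
    φ H.c0 = H'.c0 ∧
    (∀ x : X, H.MarkedPt x → φ (H.f x) = H'.f (φ x)) ∧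
    (∀ x x' : X, H.MarkedPt x → H.MarkedPt x' →
      (H.IsEdge x x' ↔ H'.IsEdge (φ x) (φ x')))

end HubbardTree

/-! ### Combinatorics of kneading sequences -/

/-- The function `ρ_ν(n) = inf { k > n : ν_k ≠ ν_{k-n} } ∈ ℕ ∪ {∞}` (sequences are
1-indexed). -/
noncomputable def rho (ν : ℕ → Sym) (n : ℕ) : ℕ∞ :=
  sInf {e : ℕ∞ | ∃ j : ℕ, e = (j : ℕ∞) ∧ n < j ∧ ν j ≠ ν (j - n)}

/-- `RhoOrbit ν k m` means that `m` belongs to the `ρ`-orbit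
`k → ρ(k) → ρ(ρ(k)) → ⋯` of `k` (stopped before reaching `∞`). -/
inductive RhoOrbit (ν : ℕ → Sym) : ℕ → ℕ → Prop
  | refl (k : ℕ) : RhoOrbit ν k k
  | step {k m j : ℕ} : RhoOrbit ν k m → rho ν m = (j : ℕ∞) → RhoOrbit ν k j

/-- `m` occurs in the internal address `1 → ρ(1) → ρ(ρ(1)) → ⋯` of `ν`. -/
def InternalAddress (ν : ℕ → Sym) (m : ℕ) : Prop := RhoOrbit ν 1 m

/-- `ν` is a `*`-periodic kneading sequence of (exact) period `n`:
`ν = overline(1 ν₂ … ν_{n-1} *)`. -/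
def StarPeriodic (ν : ℕ → Sym) (n : ℕ) : Prop :=
  2 ≤ n ∧ ν 1 = Sym.one ∧ ν n = Sym.star ∧
    (∀ k, 1 ≤ k → ν (k + n) = ν k) ∧
    (∀ k, 1 ≤ k → k < n → ν k ≠ Sym.star)

/-- `ν` fails the admissibility condition for period `m`. -/
def FailsAdmissibility (ν : ℕ → Sym) (m : ℕ) : Prop :=
  1 ≤ m ∧
  ¬ InternalAddress ν m ∧
  (∀ k : ℕ, k ∣ m → 1 ≤ k → k < m → rho ν k ≤ (m : ℕ∞)) ∧
  ∃ R r : ℕ, rho ν m = (R : ℕ∞) ∧ 1 ≤ r ∧ r ≤ m ∧ r ≡ R [MOD m] ∧ RhoOrbit ν r m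

open Classical in
/-- The number `q(m)` of arms predicted by the kneading sequence, where
`ρ(m) = R < ∞` and `r ∈ {1,…,m}` is congruent to `R` modulo `m`. -/
noncomputable def qArms (ν : ℕ → Sym) (m R r : ℕ) : ℕ :=
  if RhoOrbit ν r m then (R - r) / m + 1 else (R - r) / m + 2


/-! ### Embeddings into the plane and cyclic order of arms -/

/-- Three points in the plane are in (strictly) counterclockwise position. -/
def Ccw (p q r : ℝ × ℝ) : Prop :=
  0 < (q.1 - p.1) * (r.2 - p.2) - (q.2 - p.2) * (r.1 - p.1)

namespace HubbardTree

variable {X : Type*} [TopologicalSpace X] (H : HubbardTree X)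

/-- Under an embedding `φ` of the tree into the plane, `p` is a first exit point of
the arm `C` at `x` through the circle of radius `ε` around `φ x`: `p = φ y` for a
point `y ∈ C` at distance exactly `ε`, such that the arc from `x` to `y` stays
within distance `< ε` before reaching `y`. -/
def ExitPt (φ : X → ℝ × ℝ) (x : X) (C : Set X) (ε : ℝ) (p : ℝ × ℝ) : Prop :=
  ∃ y ∈ C, φ y = p ∧ dist (φ x) p = ε ∧
    ∀ z ∈ H.arc x y, z ≠ y → dist (φ x) (φ z) < ε

/-- The local arms at `x` represented by the arms `C, C', C''` are in
counterclockwise cyclic order under the embedding `φ`. -/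
def ArmsCcw (φ : X → ℝ × ℝ) (x : X) (C C' C'' : Set X) : Prop :=
  ∃ ε₀ : ℝ, 0 < ε₀ ∧ ∀ ε : ℝ, 0 < ε → ε < ε₀ →
    ∀ p p' p'' : ℝ × ℝ, H.ExitPt φ x C ε p → H.ExitPt φ x C' ε p' →
      H.ExitPt φ x C'' ε p'' → Ccw p p' p''

/-- `f` respects the cyclic order (induced by the embedding `φ`) of the local arms
at all branch points. -/
def RespectsCyclicOrder (φ : X → ℝ × ℝ) : Prop :=
  ∀ x : X, IsBranchPt x →
    ∀ C C' C'' : Set X, C ∈ arms x → C' ∈ arms x → C'' ∈ arms x →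
      C ≠ C' → C' ≠ C'' → C ≠ C'' → H.ArmsCcw φ x C C' C'' →
      ∀ D D' D'' : Set X, MapsLocalArm H.f x C D → MapsLocalArm H.f x C' D' →
        MapsLocalArm H.f x C'' D'' → H.ArmsCcw φ (H.f x) D D' D''

/-- The Hubbard tree can be topologically embedded into the plane `ℝ²` so that `f`
respects the cyclic order of the local arms at all branch points. -/
def PlanarEmbeddable : Prop :=
  ∃ φ : X → ℝ × ℝ, Topology.IsEmbedding φ ∧ H.RespectsCyclicOrder φ

end HubbardTree


/-! ### Topological lemmas -/

section TreeTop

variable {X : Type*} [TopologicalSpace X]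

theorem armTo_subset (z y : X) : armTo z y ⊆ {z}ᶜ := connectedComponentIn_subset _ _

theorem not_mem_armTo (z y : X) : z ∉ armTo z y := fun h => armTo_subset z y h rfl

theorem mem_armTo_self {z y : X} (h : y ≠ z) : y ∈ armTo z y := mem_connectedComponentIn h

theorem armTo_preconn (z y : X) : IsPreconnected (armTo z y) := isPreconnected_connectedComponentIn

theorem armTo_eq {z y x : X} (h : y ∈ armTo z x) : armTo z x = armTo z y :=
  connectedComponentIn_eq h

theorem armTo_symm {z y x : X} (h : y ∈ armTo z x) : x ∈ armTo z y := by
  rw [← armTo_eq h]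
  have : x ∈ ({z}ᶜ : Set X) := connectedComponentIn_nonempty_iff.1 ⟨y, h⟩
  exact mem_armTo_self this

theorem subset_armTo {z x : X} {s : Set X} (hs : IsPreconnected s) (hx : x ∈ s) (hz : z ∉ s) :
    s ⊆ armTo z x :=
  hs.subset_connectedComponentIn hx (fun w hw h => hz (h ▸ hw))

theorem closure_armTo (z y : X) (h : y ≠ z) : closure (armTo z y) ⊆ insert z (armTo z y) := by
  intro w hw
  by_cases hwz : w = z
  · exact Or.inl hwz
  right
  have hc : IsPreconnected (insert w (armTo z y)) :=
    (armTo_preconn z y).subset_closure (Set.subset_insert _ _)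
      (Set.insert_subset hw subset_closure)
  refine subset_armTo hc (Or.inr (mem_armTo_self h)) ?_ (Set.mem_insert _ _)
  rintro (h1 | h1)
  · exact hwz h1.symm
  · exact not_mem_armTo _ _ h1

theorem armTo_mem_arms {z y : X} (h : y ≠ z) : armTo z y ∈ arms z := ⟨y, h, rfl⟩

/-- points different from `z` separated from `b` by `z` -/
def sh (b z : X) : Set X := {x | x ≠ z ∧ x ∉ armTo z b}

theorem not_mem_sh (b z : X) : z ∉ sh b z := fun h => h.1 rfl

theorem base_not_mem_sh {b z : X} : b ∉ sh b z := fun h => h.2 (mem_armTo_self h.1)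

theorem sh_arm {b z x : X} (h : x ∈ sh b z) : armTo z x ⊆ sh b z := by
  intro w hw
  refine ⟨fun e => not_mem_armTo z x (e ▸ hw), fun h1 => h.2 ?_⟩
  rw [armTo_eq h1]
  exact armTo_symm hw

variable [T2Space X]

theorem isClosed_insert_armTo (z y : X) (h : y ≠ z) : IsClosed (insert z (armTo z y)) := by
  apply isClosed_of_closure_subset
  rw [Set.insert_eq, closure_union, closure_singleton]
  exact Set.union_subset (by simp) (closure_armTo z y h)

variable (hA : ∀ x : X, (arms x).Finite)
include hA

theorem isOpen_armTo (z y : X) (h : y ≠ z) : IsOpen (armTo z y) := by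
  rw [← isClosed_compl_iff]
  have : (armTo z y)ᶜ = {z} ∪ ⋃ D ∈ arms z \ {armTo z y}, insert z D := by
    ext w
    simp only [Set.mem_compl_iff, Set.mem_union, Set.mem_singleton_iff, Set.mem_iUnion]
    constructor
    · intro hw
      by_cases hwz : w = z
      · exact Or.inl hwz
      right
      refine ⟨armTo z w, ⟨armTo_mem_arms hwz, ?_⟩, Or.inr (mem_armTo_self hwz)⟩
      intro e
      apply hw
      rw [← (e : armTo z w = armTo z y)]
      exact mem_armTo_self hwz
    · rintro (rfl | ⟨D, ⟨⟨x, hx, rfl⟩, hD2⟩, h1⟩) hw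
      · exact not_mem_armTo _ _ hw
      · rcases h1 with rfl | h1
        · exact not_mem_armTo _ _ hw
        · apply hD2
          exact (armTo_eq (z := z) (x := x) h1).trans (armTo_eq hw).symm
  rw [this]
  refine isClosed_singleton.union (((hA z).subset Set.sdiff_subset).isClosed_biUnion ?_)
  rintro D ⟨⟨x, hx, rfl⟩, -⟩
  exact isClosed_insert_armTo z x hx

theorem isClosed_insert_sh {b z : X} (h : b ≠ z) : IsClosed (insert z (sh b z)) := by
  have : insert z (sh b z) = (armTo z b)ᶜ := by
    ext w
    constructor
    · rintro (rfl | h1)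
      · exact not_mem_armTo _ _
      · exact h1.2
    · intro h1
      by_cases hw : w = z
      · exact Or.inl hw
      · exact Or.inr ⟨hw, h1⟩
  rw [this, isClosed_compl_iff]
  exact isOpen_armTo hA z b h

variable [ConnectedSpace X]

theorem mem_closure_armTo (z y : X) (h : y ≠ z) : z ∈ closure (armTo z y) := by
  by_contra hz
  have hcl : IsClosed (armTo z y) := by
    apply isClosed_of_closure_subset
    intro w hw
    rcases closure_armTo z y h hw with rfl | h1
    · exact absurd hw hz
    · exact h1
  have : IsClopen (armTo z y) := ⟨hcl, isOpen_armTo hA z y h⟩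
  rcases isClopen_iff.1 this with h1 | h1
  · have := mem_armTo_self h
    rw [h1] at this
    exact this
  · apply not_mem_armTo z y
    rw [h1]
    trivial

theorem insert_armTo_preconn (z y : X) (h : y ≠ z) : IsPreconnected (insert z (armTo z y)) :=
  (armTo_preconn z y).subset_closure (Set.subset_insert _ _)
    (Set.insert_subset (mem_closure_armTo hA z y h) subset_closure)

theorem insert_sh_preconn (b z : X) : IsPreconnected (insert z (sh b z)) := by
  refine isPreconnected_of_forall z ?_
  rintro y (rfl | hy)
  · exact ⟨{y}, by simp, by simp, by simp, isPreconnected_singleton⟩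
  · refine ⟨insert z (armTo z y), ?_, Or.inl rfl, Or.inr (mem_armTo_self hy.1),
      insert_armTo_preconn hA z y hy.1⟩
    exact Set.insert_subset_insert (sh_arm hy)

theorem sh_nested {b x y : X} (hb : b ≠ x) (h : y ∈ sh b x) : insert y (sh b y) ⊆ sh b x := by
  have h1 : insert x (armTo x b) ⊆ armTo y b := by
    refine subset_armTo (insert_armTo_preconn hA x b hb) (Or.inr (mem_armTo_self hb)) ?_
    rintro (rfl | h2)
    · exact h.1 rfl
    · exact h.2 h2
  rintro w (rfl | hw)
  · exact h
  · exact ⟨fun e => hw.2 (h1 (Or.inl e)), fun e => hw.2 (h1 (Or.inr e))⟩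

theorem sh_disj {b x y : X} (h1 : y ∈ armTo x b) (h2 : x ∈ armTo y b) :
    insert y (sh b y) ⊆ armTo x b := by
  rw [armTo_eq h1]
  refine subset_armTo (insert_sh_preconn hA b y) (Or.inl rfl) ?_
  rintro (rfl | h)
  · exact not_mem_armTo _ _ h2
  · exact h.2 h2

theorem sh_nonempty {b z : X} (hb : b ≠ z) (he : ¬ IsEndpoint z) : (sh b z).Nonempty := by
  by_contra hne
  apply he
  unfold IsEndpoint
  rw [Set.ncard_eq_one]
  refine ⟨armTo z b, ?_⟩
  ext C
  constructor
  · rintro ⟨y, hy, rfl⟩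
    by_contra hC
    apply hne
    refine ⟨y, hy, fun h => hC ?_⟩
    exact (armTo_eq h).symm
  · rintro rfl
    exact armTo_mem_arms hb

variable [CompactSpace X]

theorem exists_endpoint_sh {b z : X} (hb : b ≠ z) (hne : (sh b z).Nonempty) :
    ∃ e ∈ sh b z, IsEndpoint e := by
  by_contra! hno
  have hbS : ∀ y ∈ sh b z, b ≠ y := fun y hy e => base_not_mem_sh (e ▸ hy)
  obtain ⟨y0, hy0⟩ := hne
  obtain ⟨m, -, hm⟩ := zorn_superset_nonempty ((fun y => insert y (sh b y)) '' sh b z) (by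
    intro c hc hchain hcne
    have hne : (⋂₀ c).Nonempty := by
      have : Nonempty c := hcne.to_subtype
      refine IsCompact.nonempty_sInter_of_directed_nonempty_isCompact_isClosed
        (fun A hA' B hB' => ?_) ?_ ?_ ?_
      · rcases hchain.total hA' hB' with h | h
        · exact ⟨A, hA', subset_rfl, h⟩
        · exact ⟨B, hB', h, subset_rfl⟩
      · intro U hU
        obtain ⟨y, hy, rfl⟩ := hc hU
        exact ⟨y, Or.inl rfl⟩
      · intro U hU
        obtain ⟨y, hy, rfl⟩ := hc hU
        exact (isClosed_insert_sh hA (hbS y hy)).isCompact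
      · intro U hU
        obtain ⟨y, hy, rfl⟩ := hc hU
        exact (isClosed_insert_sh hA (hbS y hy))
    obtain ⟨p, hp⟩ := hne
    have hpS : p ∈ sh b z := by
      obtain ⟨U, hU⟩ := hcne
      have := hp U hU
      obtain ⟨y, hy, rfl⟩ := hc hU
      exact sh_nested hA hb hy this
    refine ⟨_, ⟨p, hpS, rfl⟩, ?_⟩
    intro U hU
    have h1 := hp U hU
    obtain ⟨y, hy, rfl⟩ := hc hU
    rcases h1 with rfl | h1
    · exact subset_rfl
    · exact (sh_nested hA (hbS y hy) h1).trans (Set.subset_insert _ _))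
    _ ⟨y0, hy0, rfl⟩
  obtain ⟨⟨y, hy, rfl⟩, hmin⟩ := hm
  obtain ⟨q, hq⟩ := sh_nonempty hA (hbS y hy) (hno y hy)
  have h1 := sh_nested hA (hbS y hy) hq
  have hqS : q ∈ sh b z := sh_nested hA hb hy (Or.inr hq)
  have h2 := hmin ⟨q, hqS, rfl⟩ (h1.trans (Set.subset_insert _ _))
  exact not_mem_sh b y (h1 (h2 (Or.inl rfl)))

variable (hE : Set.Finite {x : X | IsEndpoint x})
include hE

theorem bad_finite (g : ℝ → X) (hg : Continuous g) (a b : ℝ) (hinj : Set.InjOn g (Set.Icc a b)) :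
    {t ∈ Set.Ioo a b | g b ∈ armTo (g t) (g a)}.Finite := by
  have key : ∀ t, t ∈ Set.Ioo a b → ∃ e, IsEndpoint e ∧ e ∈ insert (g t) (sh (g a) (g t)) := by
    intro t ht
    by_cases h : IsEndpoint (g t)
    · exact ⟨_, h, Or.inl rfl⟩
    · have hb : g a ≠ g t := fun e => ht.1.ne
        (hinj ⟨le_rfl, (ht.1.trans ht.2).le⟩ ⟨ht.1.le, ht.2.le⟩ e)
      obtain ⟨e, he, h2⟩ := exists_endpoint_sh hA hb (sh_nonempty hA hb h)
      exact ⟨e, h2, Or.inr he⟩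
  choose! e he1 he2 using key
  refine Set.Finite.of_finite_image (f := e) (hE.subset ?_) ?_
  · rintro _ ⟨t, ht, rfl⟩
    exact he1 t ht.1
  have arcs : ∀ s t, s ∈ Set.Ioo a b → t ∈ Set.Ioo a b → s ≠ t → g b ∈ armTo (g t) (g a) →
      g s ∈ armTo (g t) (g a) := by
    intro s t hs ht hst hbad
    rcases lt_or_gt_of_ne hst with h | h
    · refine subset_armTo (s := g '' Set.Icc a s) (isPreconnected_Icc.image _ hg.continuousOn)
        ⟨a, ⟨le_rfl, hs.1.le⟩, rfl⟩ ?_ ⟨s, ⟨hs.1.le, le_rfl⟩, rfl⟩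
      rintro ⟨r, hr, hrt⟩
      have := hinj ⟨hr.1, hr.2.trans hs.2.le⟩ ⟨ht.1.le, ht.2.le⟩ hrt
      linarith [hr.2]
    · rw [armTo_eq hbad]
      refine subset_armTo (s := g '' Set.Icc s b) (isPreconnected_Icc.image _ hg.continuousOn)
        ⟨b, ⟨hs.2.le, le_rfl⟩, rfl⟩ ?_ ⟨s, ⟨le_rfl, hs.2.le⟩, rfl⟩
      rintro ⟨r, hr, hrt⟩
      have := hinj ⟨hs.1.le.trans hr.1, hr.2⟩ ⟨ht.1.le, ht.2.le⟩ hrt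
      linarith [hr.1]
  intro s hs t ht hst
  by_contra hne
  have h1 := sh_disj hA (arcs s t hs.1 ht.1 hne ht.2) (arcs t s ht.1 hs.1 (Ne.symm hne) hs.2)
    (he2 s hs.1)
  rw [hst] at h1
  rcases he2 t ht.1 with h2 | h2
  · rw [h2] at h1
    exact not_mem_armTo _ _ h1
  · exact h2.2 h1

variable (hP : ∀ x y : X, x ≠ y → ∃ g : ℝ → X, Continuous g ∧ Set.InjOn g (Set.Icc 0 1) ∧
  g 0 = x ∧ g 1 = y)
include hP

theorem exists_sep {p q : X} (h : p ≠ q) : ∃ v, v ≠ p ∧ v ≠ q ∧ q ∉ armTo v p := by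
  obtain ⟨g, hg, hinj, rfl, rfl⟩ := hP p q h
  have hinf : (Set.Ioo (0 : ℝ) 1).Infinite := Set.Ioo_infinite one_pos
  obtain ⟨t, ht, hbad⟩ := (hinf.sdiff (bad_finite hA hE g hg 0 1 hinj)).nonempty
  refine ⟨g t, fun e => ?_, fun e => ?_, fun h => hbad ⟨ht, h⟩⟩
  · exact ht.1.ne' (hinj ⟨ht.1.le, ht.2.le⟩ ⟨le_rfl, zero_le_one⟩ e)
  · exact ht.2.ne (hinj ⟨ht.1.le, ht.2.le⟩ ⟨zero_le_one, le_rfl⟩ e)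

theorem arc_separates (g : ℝ → X) (hg : Continuous g) (hinj : Set.InjOn g (Set.Icc 0 1))
    (t0 : ℝ) (ht0 : t0 ∈ Set.Ioo (0 : ℝ) 1) : g 1 ∉ armTo (g t0) (g 0) := by
  intro hy
  have hinj' : Set.InjOn g (Set.Icc 0 t0) := hinj.mono (Set.Icc_subset_Icc_right ht0.2.le)
  have hfin := bad_finite hA hE g hg 0 t0 hinj'
  set G : Set ℝ := {t ∈ Set.Ioo 0 t0 | g t0 ∉ armTo (g t) (g 0)} with hG
  have hne0 : ∀ t ∈ Set.Ioo 0 t0, g 0 ≠ g t := fun t ht e =>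
    ht.1.ne (hinj' ⟨le_rfl, ht0.1.le⟩ ⟨ht.1.le, ht.2.le⟩ e)
  have hx0 : g 0 ≠ g t0 := fun e => ht0.1.ne (hinj' ⟨le_rfl, ht0.1.le⟩ ⟨ht0.1.le, le_rfl⟩ e)
  -- points of `G` close to `t0`
  have hclose : ∀ s < t0, ∃ t ∈ G, s < t := by
    intro s hs
    have hinf : (Set.Ioo (max s 0) t0).Infinite := Set.Ioo_infinite (max_lt hs ht0.1)
    obtain ⟨t, ht, hbad⟩ := (hinf.sdiff hfin).nonempty
    have h1 := (max_lt_iff.1 ht.1)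
    exact ⟨t, ⟨⟨h1.2, ht.2⟩, fun h => hbad ⟨⟨h1.2, ht.2⟩, h⟩⟩, h1.1⟩
  -- right part of the arc
  have hright : ∀ t ∈ Set.Ioo 0 t0, ∀ s, t < s → s ≤ 1 → g s ∈ armTo (g t) (g t0) := by
    intro t ht s hs hs1
    have hm : t < min s t0 := lt_min hs ht.2
    refine subset_armTo (s := g '' Set.Icc (min s t0) 1) (isPreconnected_Icc.image _ hg.continuousOn)
        ⟨t0, ⟨min_le_right _ _, ht0.2.le⟩, rfl⟩ ?_ ⟨s, ⟨min_le_left _ _, hs1⟩, rfl⟩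
    rintro ⟨r, hr, hrt⟩
    have := hinj ⟨ht.1.le.trans (hm.le.trans hr.1), hr.2⟩ ⟨ht.1.le, ht.2.le.trans ht0.2.le⟩ hrt
    linarith [hr.1]
  have hmono : ∀ s ∈ G, ∀ t ∈ G, s ≤ t → armTo (g s) (g 0) ⊆ armTo (g t) (g 0) := by
    intro s hs t ht hst
    rcases hst.eq_or_lt with rfl | hst
    · exact subset_rfl
    refine subset_armTo (armTo_preconn _ _) (mem_armTo_self (hne0 s hs.1)) ?_
    intro h
    apply hs.2
    rw [armTo_eq h]
    exact armTo_symm (hright s hs.1 t hst (ht.1.2.le.trans ht0.2.le))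
  set U : Set X := ⋃ t ∈ G, armTo (g t) (g 0) with hU
  have hUo : IsOpen U := isOpen_biUnion fun t ht => isOpen_armTo hA _ _ (hne0 t ht.1)
  have hsub : armTo (g t0) (g 0) ⊆ U := by
    refine (armTo_preconn _ _).subset_of_closure_inter_subset hUo ?_ ?_
    · obtain ⟨t, ht, -⟩ := hclose 0 ht0.1
      exact ⟨g 0, mem_armTo_self hx0, Set.mem_biUnion ht (mem_armTo_self (hne0 t ht.1))⟩
    · rintro q ⟨hq1, hq2⟩
      by_contra hqU
      have hqz : g t0 ≠ q := fun e => not_mem_armTo (g t0) (g 0) (by rw [← e] at hq2; exact hq2)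
      obtain ⟨v, hv1, hv2, hv3⟩ := exists_sep hA hE hP hqz
      have hWo := isOpen_armTo hA v q (Ne.symm hv2)
      obtain ⟨r, hrW, hrU⟩ := mem_closure_iff.1 hq1 _ hWo (mem_armTo_self (Ne.symm hv2))
      obtain ⟨t1, ht1, hr⟩ := Set.mem_iUnion₂.1 hrU
      have hin : ∀ t ∈ G, t1 < t → g t ∈ armTo v q := by
        intro t ht h1
        by_contra hnot
        have h2 := subset_armTo (armTo_preconn v q) hrW hnot
        have h3 : r ∈ armTo (g t) (g 0) := hmono t1 ht1 t ht h1.le hr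
        rw [← armTo_eq h3] at h2
        exact hqU (Set.mem_biUnion ht (h2 (mem_armTo_self (Ne.symm hv2))))
      have hzcl : g t0 ∈ closure (armTo v q) := by
        rw [mem_closure_iff]
        intro O hO hzO
        have h1 : g ⁻¹' O ∈ nhds t0 := (hO.preimage hg).mem_nhds hzO
        obtain ⟨ε, hε, hball⟩ := Metric.mem_nhds_iff.1 h1
        obtain ⟨t, ht, h2⟩ := hclose (max t1 (t0 - ε)) (max_lt ht1.1.2 (by linarith))
        rw [max_lt_iff] at h2
        refine ⟨g t, hball ?_, hin t ht h2.1⟩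
        rw [Metric.mem_ball, Real.dist_eq, abs_lt]
        constructor <;> linarith [ht.1.2]
      rcases closure_armTo v q (Ne.symm hv2) hzcl with h1 | h1
      · exact hv1 h1.symm
      · exact hv3 (armTo_symm h1)
  obtain ⟨t, ht, h1⟩ := Set.mem_iUnion₂.1 (hsub hy)
  have h2 := hright t ht.1 1 (ht.1.2.trans ht0.2) le_rfl
  apply ht.2
  rw [armTo_eq h1]
  exact armTo_symm h2

end TreeTop

/-! ### Arcs and injectivity -/

section Arcs

variable {X : Type*} [TopologicalSpace X]

theorem isArc_image [T2Space X] (g : ℝ → X) (hg : Continuous g) {a b : ℝ} (hab : a < b)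
    (hinj : Set.InjOn g (Set.Icc a b)) : IsArcBetween (g '' Set.Icc a b) (g a) (g b) := by
  right
  refine ⟨fun e => hab.ne (hinj ⟨le_rfl, hab.le⟩ ⟨hab.le, le_rfl⟩ e), ?_⟩
  have hba : 0 < b - a := sub_pos.2 hab
  let γ : Path (g a) (g b) :=
    { toFun := fun t => g ((b - a) * t + a)
      continuous_toFun := by fun_prop
      source' := by simp
      target' := by simp }
  have hγ : ∀ t, γ t = g ((b - a) * t + a) := fun t => rfl
  have hmem : ∀ t : unitInterval, (b - a) * (t : ℝ) + a ∈ Set.Icc a b := by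
    intro t
    have h0 := t.2.1
    have h1 := t.2.2
    constructor <;> nlinarith
  refine ⟨γ, ?_, ?_⟩
  · refine (Continuous.isClosedEmbedding γ.continuous ?_).isEmbedding
    intro s t hst
    rw [hγ, hγ] at hst
    have := hinj (hmem s) (hmem t) hst
    ext
    have h2 : (b - a) * (s : ℝ) = (b - a) * t := by linarith
    exact mul_left_cancel₀ hba.ne' h2
  · ext x
    constructor
    · rintro ⟨t, rfl⟩
      exact ⟨_, hmem t, rfl⟩
    · rintro ⟨r, hr, rfl⟩
      refine ⟨⟨(r - a) / (b - a), div_nonneg (by linarith [hr.1]) hba.le,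
        (div_le_one hba).2 (by linarith [hr.2])⟩, ?_⟩
      rw [hγ]
      congr 1
      simp only
      field_simp
      ring

theorem isArc_symm {A : Set X} {x y : X} (h : IsArcBetween A x y) : IsArcBetween A y x := by
  rcases h with ⟨rfl, rfl⟩ | ⟨hne, γ, hγ, rfl⟩
  · exact Or.inl ⟨rfl, rfl⟩
  · right
    refine ⟨hne.symm, γ.symm, ?_, Path.symm_range γ⟩
    have : (γ.symm : unitInterval → X) = γ ∘ unitInterval.symmHomeomorph := rfl
    rw [this]
    exact hγ.comp unitInterval.symmHomeomorph.isEmbedding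

variable [T2Space X]
  (hU : ∀ (x y : X) (A B : Set X), IsArcBetween A x y → IsArcBetween B x y → A = B)
include hU

theorem no_circle (g : ℝ → X) (hg : Continuous g) {a b : ℝ} (hab : a < b) (hgab : g a = g b)
    (hinj : Set.InjOn g (Set.Ico a b)) : False := by
  set m := (a + b) / 2 with hm
  have ham : a < m := by rw [hm]; linarith
  have hmb : m < b := by rw [hm]; linarith
  have h1 : Set.InjOn g (Set.Icc a m) := hinj.mono (Set.Icc_subset_Ico_right hmb)
  have h2 : Set.InjOn g (Set.Icc m b) := by
    intro s hs t ht hst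
    rcases hs.2.eq_or_lt with rfl | hs2 <;> rcases ht.2.eq_or_lt with rfl | ht2
    · rfl
    · rw [← hgab] at hst
      have := hinj ⟨le_rfl, hab⟩ ⟨ham.le.trans ht.1, ht2⟩ hst
      linarith [ht.1]
    · rw [← hgab] at hst
      have := hinj ⟨ham.le.trans hs.1, hs2⟩ ⟨le_rfl, hab⟩ hst
      linarith [hs.1]
    · exact hinj ⟨ham.le.trans hs.1, hs2⟩ ⟨ham.le.trans ht.1, ht2⟩ hst
  have e := hU _ _ _ _ (isArc_image g hg ham h1) (hgab ▸ isArc_symm (isArc_image g hg hmb h2))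
  have h3 : g ((a + m) / 2) ∈ g '' Set.Icc m b := by
    rw [← e]
    exact ⟨(a + m) / 2, ⟨by linarith, by linarith⟩, rfl⟩
  obtain ⟨r, hr, hr2⟩ := h3
  rcases hr.2.eq_or_lt with rfl | hr3
  · rw [← hgab] at hr2
    have := hinj ⟨le_rfl, hab⟩ ⟨by linarith, by linarith⟩ hr2
    linarith
  · have := hinj ⟨ham.le.trans hr.1, hr3⟩ ⟨by linarith, by linarith⟩ hr2
    linarith [hr.1]

theorem locinj_injOn (g : ℝ → X) (hg : Continuous g)
    (hloc : ∀ t ∈ Set.Ioc (0 : ℝ) 1, ∃ V ∈ nhds t, Set.InjOn g (V ∩ Set.Icc 0 1)) :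
    Set.InjOn g (Set.Icc 0 1) := by
  have step : ∀ u v, 0 < u → u < v → v ≤ 1 → g u ≠ g v := by
    intro u v hu huv hv he
    let P : Set (ℝ × ℝ) := {p | p ∈ Set.Icc u v ×ˢ Set.Icc u v ∧ g p.1 = g p.2 ∧ p.1 < p.2}
    have hPc : IsClosed P := by
      apply isClosed_of_closure_subset
      intro p hp
      have hF : IsClosed {p : ℝ × ℝ | p ∈ Set.Icc u v ×ˢ Set.Icc u v ∧ g p.1 = g p.2 ∧ p.1 ≤ p.2} :=
        (isClosed_Icc.prod isClosed_Icc).inter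
          ((isClosed_eq (hg.comp continuous_fst) (hg.comp continuous_snd)).inter
            (isClosed_le continuous_fst continuous_snd))
      have hPF : P ⊆ {p : ℝ × ℝ | p ∈ Set.Icc u v ×ˢ Set.Icc u v ∧ g p.1 = g p.2 ∧ p.1 ≤ p.2} :=
        fun p hp => ⟨hp.1, hp.2.1, hp.2.2.le⟩
      have h1 := closure_minimal hPF hF hp
      refine ⟨h1.1, h1.2.1, lt_of_le_of_ne h1.2.2 ?_⟩
      intro heq
      obtain ⟨x, y⟩ := p
      simp only at heq
      subst heq
      obtain ⟨V, hV, hVi⟩ := hloc x ⟨hu.trans_le h1.1.1.1, h1.1.1.2.trans hv⟩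
      obtain ⟨q, hq1, hq2⟩ := mem_closure_iff_nhds.1 hp _ (prod_mem_nhds hV hV)
      refine hq2.2.2.ne (hVi ⟨hq1.1, ?_⟩ ⟨hq1.2, ?_⟩ hq2.2.1)
      · exact ⟨hu.le.trans hq2.1.1.1, hq2.1.1.2.trans hv⟩
      · exact ⟨hu.le.trans hq2.1.2.1, hq2.1.2.2.trans hv⟩
    have hPk : IsCompact P :=
      (isCompact_Icc.prod isCompact_Icc).of_isClosed_subset hPc (fun p hp => hp.1)
    obtain ⟨p, hp, hmin⟩ := hPk.exists_isMinOn ⟨(u, v), ⟨⟨le_rfl, huv.le⟩, ⟨huv.le, le_rfl⟩⟩, he, huv⟩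
      (f := fun p : ℝ × ℝ => p.2 - p.1) (by fun_prop)
    have aux : ∀ s ∈ Set.Ico p.1 p.2, ∀ t ∈ Set.Ico p.1 p.2, s < t → g s ≠ g t := by
      intro s hs t ht hst hgst
      have h1 : (s, t) ∈ P := ⟨⟨⟨hp.1.1.1.trans hs.1, hs.2.le.trans hp.1.2.2⟩,
        ⟨hp.1.1.1.trans ht.1, ht.2.le.trans hp.1.2.2⟩⟩, hgst, hst⟩
      have h2 : p.2 - p.1 ≤ t - s := hmin h1
      linarith [hs.1, ht.2]
    refine no_circle hU g hg hp.2.2 hp.2.1 ?_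
    intro s hs t ht hst
    rcases lt_trichotomy s t with h | h | h
    · exact absurd hst (aux s hs t ht h)
    · exact h
    · exact absurd hst.symm (aux t ht s hs h)
  have step0 : ∀ v, 0 < v → v ≤ 1 → g 0 ≠ g v := by
    intro v hv hv1 he
    refine no_circle hU g hg hv he ?_
    have aux : ∀ s ∈ Set.Ico 0 v, ∀ t ∈ Set.Ico 0 v, s < t → g s ≠ g t := by
      intro s hs t ht hst hgst
      rcases hs.1.eq_or_lt with rfl | h0
      · exact step t v hst ht.2 hv1 (hgst.symm.trans he)
      · exact step s t h0 hst (ht.2.le.trans hv1) hgst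
    intro s hs t ht hst
    rcases lt_trichotomy s t with h | h | h
    · exact absurd hst (aux s hs t ht h)
    · exact h
    · exact absurd hst.symm (aux t ht s hs h)
  have aux : ∀ s ∈ Set.Icc (0 : ℝ) 1, ∀ t ∈ Set.Icc (0 : ℝ) 1, s < t → g s ≠ g t := by
    intro s hs t ht hst
    rcases hs.1.eq_or_lt with rfl | h0
    · exact step0 t hst ht.2
    · exact step s t h0 hst ht.2
  intro s hs t ht hst
  rcases lt_trichotomy s t with h | h | h
  · exact absurd hst (aux s hs t ht h)
  · exact h
  · exact absurd hst.symm (aux t ht s hs h)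

end Arcs

namespace HubbardTree

variable {X : Type*} [TopologicalSpace X] (H : HubbardTree X)

theorem exists_path {X : Type*} [TopologicalSpace X] (H : HubbardTree X) (x y : X) (h : x ≠ y) : ∃ g : ℝ → X, Continuous g ∧
    Set.InjOn g (Set.Icc 0 1) ∧ g 0 = x ∧ g 1 = y := by
  rcases H.arc_isArc x y with ⟨e, -⟩ | ⟨-, γ, hγ, -⟩
  · exact absurd e h
  refine ⟨γ.extend, γ.continuous_extend, ?_, γ.extend_zero, γ.extend_one⟩
  intro s hs t ht hst
  rw [γ.extend_apply hs, γ.extend_apply ht] at hst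
  have := hγ.injective hst
  simpa using this

theorem f_injOn_path (g : ℝ → X) (hg : Continuous g) (hinj : Set.InjOn g (Set.Icc 0 1))
    (h0 : g 0 = H.c0) : Set.InjOn (H.f ∘ g) (Set.Icc 0 1) := by
  have := H.t2
  refine locinj_injOn (fun x y A B hA hB => (H.arc_unique x y A hA).trans
    (H.arc_unique x y B hB).symm) _ (H.cont.comp hg) ?_
  intro t ht
  have hne : g t ≠ H.c0 := by
    rw [← h0]
    exact fun e => ht.1.ne' (hinj ⟨ht.1.le, ht.2⟩ ⟨le_rfl, zero_le_one⟩ e)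
  obtain ⟨U, hUo, hxU, hemb⟩ := H.local_homeo _ hne
  refine ⟨g ⁻¹' U, (hUo.preimage hg).mem_nhds hxU, ?_⟩
  intro r hr s hs hrs
  have h1 := @hemb.injective ⟨g r, hr.1⟩ ⟨g s, hs.1⟩ hrs
  exact hinj hr.2 hs.2 (congrArg Subtype.val h1)

/-- the key step -/
theorem key_step {z x : X} (hz : z ≠ H.c0) (hx : x ∈ sh H.c0 z)
    (hc : H.c1 ∉ sh H.c0 (H.f z)) (hz' : H.f z ≠ H.c0) : H.f x ∈ sh H.c0 (H.f z) := by
  have := H.t2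
  have := H.compact
  have := H.conn
  have hxc : H.c0 ≠ x := fun e => base_not_mem_sh (b := H.c0) (z := z) (by rw [← e] at hx; exact hx)
  obtain ⟨g, hg, hinj, h0, h1⟩ := H.exists_path _ _ hxc
  have hmem : z ∈ g '' Set.Icc 0 1 := by
    by_contra hnot
    apply hx.2
    exact subset_armTo (isPreconnected_Icc.image _ hg.continuousOn)
      ⟨0, ⟨le_rfl, zero_le_one⟩, h0⟩ hnot ⟨1, ⟨zero_le_one, le_rfl⟩, h1⟩
  obtain ⟨t, ht, rfl⟩ := hmem
  have ht0 : t ≠ 0 := by rintro rfl; exact hz h0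
  have ht1 : t ≠ 1 := by rintro rfl; exact hx.1 h1.symm
  have ht' : t ∈ Set.Ioo (0 : ℝ) 1 := ⟨lt_of_le_of_ne ht.1 ht0.symm, lt_of_le_of_ne ht.2 ht1⟩
  have hfi := H.f_injOn_path g hg hinj h0
  have hsep := arc_separates H.arms_finite H.endpoint_finite H.exists_path (H.f ∘ g)
    (H.cont.comp hg) hfi t ht'
  have e1 : H.f x ≠ H.f (g t) := by
    rw [← h1]
    exact fun e => ht1 (hfi ⟨zero_le_one, le_rfl⟩ ht e).symm
  have e0 : H.c1 ≠ H.f (g t) := by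
    unfold c1
    rw [← h0]
    exact fun e => ht0 (hfi ⟨le_rfl, zero_le_one⟩ ht e).symm
  simp only [Function.comp, h0, h1] at hsep
  refine ⟨e1, fun h => hsep ?_⟩
  have h2 : H.c1 ∈ armTo (H.f (g t)) H.c0 := by
    by_contra h3
    exact hc ⟨e0, h3⟩
  rw [armTo_eq h2] at h
  exact h

end HubbardTree

/-- Lemma 3.1, "Characteristic Point".
Every periodic orbit containing no endpoint of the tree (whose itineraries differ
from the itineraries of all endpoints, in case the critical orbit is preperiodic)
has a unique characteristic point: a point `z` of the orbit such that the critical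
value lies in one component of `T \ {z}` and the critical point together with all
other orbit points lie in a different component. -/
theorem exists_unique_characteristic_point
    {X : Type*} [TopologicalSpace X] (H : HubbardTree X) (z : X) (n : ℕ)
    (hn : 1 ≤ n) (hper : H.f^[n] z = z)
    (hnoend : ∀ k : ℕ, ¬ IsEndpoint (H.f^[k] z))
    (hpre : (¬ ∃ p : ℕ, 1 ≤ p ∧ H.f^[p] H.c0 = H.c0) →
      ∀ k : ℕ, ∀ x : X, IsEndpoint x →
        ∃ i : ℕ, 1 ≤ i ∧ H.itin (H.f^[k] z) i ≠ H.itin x i) :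
    ∃! w : X, (∃ k : ℕ, H.f^[k] z = w) ∧ H.IsCharacteristic w := by
  have := H.t2
  have := H.compact
  have := H.conn
  have hA := H.arms_finite
  have hmul : ∀ m k, H.f^[k + m * n] z = H.f^[k] z := by
    intro m
    induction m with
    | zero => intro k; simp
    | succ m ih =>
      intro k
      have : k + (m + 1) * n = (k + m * n) + n := by ring
      rw [this, Function.iterate_add_apply, hper, ih]
  -- the orbit avoids the critical point
  have hc0 : ∀ k, H.f^[k] z ≠ H.c0 := by
    intro k hk
    have hend : ∃ e : X, IsEndpoint e := by
      by_cases h : IsEndpoint H.c0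
      · exact ⟨_, h⟩
      · obtain ⟨e, -, he⟩ := exists_endpoint_sh hA H.crit_not_fixed
          (sh_nonempty hA H.crit_not_fixed h)
        exact ⟨e, he⟩
    obtain ⟨e, he⟩ := hend
    obtain ⟨m, hm⟩ := H.endpoints_on_orbit e he
    apply hnoend (m + k)
    rw [Function.iterate_add_apply, hk, hm]
    exact he
  have hstep : ∀ k x, H.c1 ∉ sh H.c0 (H.f^[k + 1] z) → x ∈ sh H.c0 (H.f^[k] z) →
      H.f x ∈ sh H.c0 (H.f^[k + 1] z) := by
    intro k x h1 h2
    have h3 := hc0 (k + 1)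
    rw [Function.iterate_succ_apply'] at h1 h3 ⊢
    exact H.key_step (hc0 k) h2 h1 h3
  have hsteps : ∀ q j x, (∀ l, j < l → l ≤ j + q → H.c1 ∉ sh H.c0 (H.f^[l] z)) →
      x ∈ sh H.c0 (H.f^[j] z) → H.f^[q] x ∈ sh H.c0 (H.f^[j + q] z) := by
    intro q
    induction q with
    | zero => intro j x _ h; exact h
    | succ q ih =>
      intro j x h hx
      rw [Function.iterate_succ_apply']
      exact hstep (j + q) _ (h _ (by omega) (by omega))
        (ih j x (fun l h1 h2 => h l h1 (by omega)) hx)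
  -- some orbit point separates `c0` from `c1`
  have hclaimA : ∃ k, H.c1 ∈ sh H.c0 (H.f^[k] z) := by
    by_contra! hno
    have hb : H.c0 ≠ H.f^[0] z := (hc0 0).symm
    obtain ⟨e, he, hee⟩ := exists_endpoint_sh hA hb (sh_nonempty hA hb (hnoend 0))
    have hall : ∀ j, H.f^[j] e ∈ sh H.c0 (H.f^[j] z) := by
      intro j
      have := hsteps j 0 e (fun l _ _ => hno l) he
      rwa [zero_add] at this
    by_cases hp : ∃ p : ℕ, 1 ≤ p ∧ H.f^[p] H.c0 = H.c0
    · obtain ⟨p, hp1, hp2⟩ := hp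
      obtain ⟨m, rfl⟩ := H.endpoints_on_orbit e hee
      have hpp : ∀ s, H.f^[s * p] H.c0 = H.c0 := by
        intro s
        induction s with
        | zero => simp
        | succ s ih => rw [Nat.succ_mul, Function.iterate_add_apply, hp2, ih]
      have h1 := hall (m * p - m)
      rw [← Function.iterate_add_apply, Nat.sub_add_cancel (Nat.le_mul_of_pos_right m hp1),
        hpp] at h1
      exact base_not_mem_sh h1
    · obtain ⟨i, -, hi⟩ := hpre hp 0 e hee
      apply hi
      unfold HubbardTree.itin
      have h1 := hall (i - 1)
      simp only [Function.iterate_zero, id]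
      set a := H.f^[i - 1] z with ha
      set b := H.f^[i - 1] e with hbdef
      have ha0 : a ≠ H.c0 := hc0 (i - 1)
      have hb0 : b ≠ H.c0 := fun e' => base_not_mem_sh (b := H.c0) (z := a)
        (by rw [e'] at h1; exact h1)
      have hba : b ∈ armTo H.c0 a := by
        refine subset_armTo (insert_sh_preconn hA H.c0 a) (Or.inl rfl) ?_ (Or.inr h1)
        rintro (h | h)
        · exact ha0 h.symm
        · exact base_not_mem_sh h
      have hiff : a ∈ H.T1 ↔ b ∈ H.T1 := by
        change a ∈ armTo H.c0 H.c1 ↔ b ∈ armTo H.c0 H.c1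
        constructor
        · intro h
          rw [armTo_eq h]
          exact hba
        · intro h
          rw [armTo_eq h]
          exact armTo_symm hba
      unfold HubbardTree.symOf
      rw [if_neg ha0, if_neg hb0]
      by_cases hT : b ∈ H.T1
      · rw [if_pos hT, if_pos (hiff.2 hT)]
      · rw [if_neg hT, if_neg (fun h => hT (hiff.1 h))]
  -- choose the smallest one
  have hfin : {S : Set X | ∃ k, H.c1 ∈ sh H.c0 (H.f^[k] z) ∧ S = sh H.c0 (H.f^[k] z)}.Finite := by
    refine ((Finset.range n).finite_toSet.image (fun k => sh H.c0 (H.f^[k] z))).subset ?_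
    rintro S ⟨k, -, rfl⟩
    refine ⟨k % n, by simpa using Nat.mod_lt k hn, ?_⟩
    have : k = k % n + (k / n) * n := by rw [mul_comm]; exact (Nat.mod_add_div k n).symm
    conv_rhs => rw [this, hmul]
  obtain ⟨S, ⟨i, hi, rfl⟩, hmin⟩ := hfin.exists_minimal
    (let ⟨k, hk⟩ := hclaimA; ⟨_, k, hk, rfl⟩)
  have hleast : ∀ j, H.c1 ∈ sh H.c0 (H.f^[j] z) →
      sh H.c0 (H.f^[i] z) ⊆ sh H.c0 (H.f^[j] z) := by
    intro j hj
    by_cases h1 : H.f^[j] z ∈ sh H.c0 (H.f^[i] z)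
    · exact hmin ⟨j, hj, rfl⟩
        ((Set.subset_insert _ _).trans (sh_nested hA (hc0 i).symm h1))
    by_cases h2 : H.f^[i] z ∈ sh H.c0 (H.f^[j] z)
    · exact (Set.subset_insert _ _).trans (sh_nested hA (hc0 j).symm h2)
    by_cases h3 : H.f^[i] z = H.f^[j] z
    · rw [h3]
    exfalso
    have h4 : H.f^[j] z ∈ armTo (H.f^[i] z) H.c0 := by
      by_contra h
      exact h1 ⟨Ne.symm h3, h⟩
    have h5 : H.f^[i] z ∈ armTo (H.f^[j] z) H.c0 := by
      by_contra h
      exact h2 ⟨h3, h⟩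
    exact hi.2 (sh_disj hA h4 h5 (Or.inr hj))
  have hclaimB : ∀ k, H.f^[k] z ∉ sh H.c0 (H.f^[i] z) := by
    have main : ∀ k, i ≤ k → H.f^[k] z ∉ sh H.c0 (H.f^[i] z) := by
      classical
      intro k hik hk
      have hP := Nat.findGreatest_spec (P := fun j => H.c1 ∈ sh H.c0 (H.f^[j] z)) hik hi
      have hgr := fun l => Nat.findGreatest_is_greatest
        (P := fun j => H.c1 ∈ sh H.c0 (H.f^[j] z)) (n := k) (k := l)
      have hle := Nat.findGreatest_le (P := fun j => H.c1 ∈ sh H.c0 (H.f^[j] z)) k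
      generalize Nat.findGreatest (fun j => H.c1 ∈ sh H.c0 (H.f^[j] z)) k = j at hP hgr hle
      obtain ⟨q, rfl⟩ := Nat.exists_eq_add_of_le hle
      have hki : sh H.c0 (H.f^[j + q] z) ⊆ sh H.c0 (H.f^[i] z) :=
        (Set.subset_insert _ _).trans (sh_nested hA (hc0 i).symm hk)
      have hall : ∀ s, H.f^[j + q + s * q] z ∈ sh H.c0 (H.f^[j] z) := by
        intro s
        induction s with
        | zero => simpa using hleast j hP hk
        | succ s ih =>
          have h1 := hsteps q j _ (fun l h1 h2 => hgr l h1 h2) ih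
          rw [← Function.iterate_add_apply] at h1
          have h2 : j + q + (s + 1) * q = q + (j + q + s * q) := by ring
          rw [h2]
          exact hleast j hP (hki h1)
      obtain ⟨n', rfl⟩ := Nat.exists_eq_add_of_le hn
      have h1 := hall n'
      have h2 : j + q + n' * q = j + q * (1 + n') := by ring
      rw [h2, hmul] at h1
      exact not_mem_sh _ _ h1
    intro k hk
    refine main (k + i * n) (by nlinarith) ?_
    rw [hmul]
    exact hk
  refine ⟨H.f^[i] z, ⟨⟨i, rfl⟩, armTo (H.f^[i] z) H.c1, armTo (H.f^[i] z) H.c0,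
    armTo_mem_arms hi.1, armTo_mem_arms (hc0 i).symm, ?_, mem_armTo_self hi.1,
    mem_armTo_self (hc0 i).symm, ?_⟩, ?_⟩
  · intro h
    apply hi.2
    rw [← h]
    exact mem_armTo_self hi.1
  · intro k hk
    rw [← Function.iterate_add_apply] at hk ⊢
    by_contra h
    exact hclaimB (k + i) ⟨hk, h⟩
  · rintro _ ⟨⟨j, rfl⟩, Cv, Cz, ⟨a, ha, rfl⟩, ⟨b, hb, rfl⟩, hne, hv, hz, hall⟩
    by_contra hij
    change H.c1 ∈ armTo (H.f^[j] z) a at hv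
    change H.c0 ∈ armTo (H.f^[j] z) b at hz
    change armTo (H.f^[j] z) a ≠ armTo (H.f^[j] z) b at hne
    have h4 : H.f^[j] z ∈ armTo (H.f^[i] z) H.c0 := by
      by_contra h
      exact hclaimB j ⟨hij, h⟩
    have h5 : H.f^[i] z ∈ armTo (H.f^[j] z) H.c0 := by
      have e : H.f^[i + j * n - j] (H.f^[j] z) = H.f^[i] z := by
        rw [← Function.iterate_add_apply, Nat.sub_add_cancel (by nlinarith), hmul]
      have := hall (i + j * n - j)
      rw [e] at this
      have h6 : H.f^[i] z ∈ armTo (H.f^[j] z) b := this (Ne.symm hij)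
      rwa [armTo_eq hz] at h6
    have h7 : H.c1 ∈ armTo (H.f^[j] z) H.c0 := sh_disj hA h5 h4 (Or.inr hi)
    apply hne
    rw [armTo_eq hv, armTo_eq hz, armTo_eq h7]

end HubbardTrees
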